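/- arXiv:math-ph/0309041 — 4 statements merged into one kernel-verified Lean document; each statement's English description precedes it below -/
import Mathlib

section
/- Let a, d : [1,∞) → ℝ be twice continuously differentiable functions satisfying, for all r ≥ 1, the coupled system a''(r) + (2/r)·a'(r) − (4/r²)·(a(r) − d(r)) = 0 and d''(r) + (2/r)·d'(r) + (2/r²)·(a(r) − d(r)) = 0. Suppose further that a(1) = 0, that a'(1) − 2·d(1) = 0, and that a(r) → 0 and d(r) → 0 as r → ∞. Then a(r) = 0 and d(r) = 0 for all r ≥ 1. -/
open Set Filter

/-!
The combinations `s = a + 2d` and `u = a - d` decouple the system into the Euler equations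
`s'' + (2/r) s' = 0` and `u'' + (2/r) u' - (6/r²) u = 0`, whose solution spaces are spanned by
`1, r⁻¹` and by `r², r⁻³`. Taking `r²` times the Wronskian with each of these powers gives four
first integrals:
`r² s' = c`, `r s' + s = e`, `r⁴ u' - 2 r³ u = p`, `r⁻¹ u' + 3 r⁻² u = q`.
Eliminating the derivatives yields `s = e - c / r` and `5 u = q r² - p / r³`, so decay at infinity
forces `e = q = 0`. Evaluated at `r = 1`, the equations `e = 0` and `q = 0` together with the two
boundary conditions are a nonsingular linear system for the Cauchy data of `(a, d)`, which
therefore vanish; hence `c = p = 0` as well, and `s = u = 0`.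
-/

/-- A function on `[1, ∞)` whose one-sided derivative vanishes is constant. -/
lemma eq_at_one {f f' : ℝ → ℝ}
    (hf : ∀ r ∈ Ici (1 : ℝ), HasDerivWithinAt f (f' r) (Ici 1) r)
    (h0 : ∀ r ∈ Ici (1 : ℝ), f' r = 0) : ∀ r ∈ Ici (1 : ℝ), f r = f 1 := by
  intro r hr
  refine constant_of_has_deriv_right_zero (a := 1) (b := r) ?_ ?_ r ⟨hr, le_rfl⟩
  · exact fun x hx => ((hf x hx.1).continuousWithinAt).mono Icc_subset_Ici_self
  · intro x hx
    have h := hf x hx.1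
    rw [h0 x hx.1] at h
    exact h.mono (Ici_subset_Ici.2 hx.1)

/-- A `C²` function on `[1, ∞)` has its iterated `derivWithin`s as genuine derivatives. -/
lemma hasDeriv_pair {f : ℝ → ℝ} (hf : ContDiffOn ℝ 2 f (Ici 1)) :
    ∀ r ∈ Ici (1 : ℝ),
      HasDerivWithinAt f (derivWithin f (Ici 1) r) (Ici 1) r ∧
      HasDerivWithinAt (derivWithin f (Ici 1))
        (derivWithin (derivWithin f (Ici 1)) (Ici 1) r) (Ici 1) r := by
  intro r hr
  have h1 : ContDiffOn ℝ 1 (derivWithin f (Ici 1)) (Ici 1) :=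
    hf.derivWithin (uniqueDiffOn_Ici 1) (by norm_num)
  exact ⟨((hf.differentiableOn (by norm_num)) r hr).hasDerivWithinAt,
    ((h1.differentiableOn (by norm_num)) r hr).hasDerivWithinAt⟩

/-- Decaying solutions of `s'' + (2/r) s' = 0` are multiples of `1 / r`: the constant mode
`s'(1) + s(1)` is zero. -/
lemma decay_harmonic {s s' s'' : ℝ → ℝ}
    (h1 : ∀ r ∈ Ici (1 : ℝ), HasDerivWithinAt s (s' r) (Ici 1) r)
    (h2 : ∀ r ∈ Ici (1 : ℝ), HasDerivWithinAt s' (s'' r) (Ici 1) r)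
    (heq : ∀ r ∈ Ici (1 : ℝ), s'' r + (2 / r) * s' r = 0)
    (hlim : Tendsto s atTop (nhds 0)) :
    s' 1 + s 1 = 0 ∧ ∀ r ∈ Ici (1 : ℝ), s r = -s' 1 / r := by
  have hc := eq_at_one (fun r hr => ((hasDerivWithinAt_id r (Ici 1)).pow 2).mul (h2 r hr)) (by
    intro r hr
    have hr0 : r ≠ 0 := (zero_lt_one.trans_le hr).ne'
    have := heq r hr
    field_simp at this
    simp
    linear_combination r * this)
  have he := eq_at_one (fun r hr => ((hasDerivWithinAt_id r (Ici 1)).mul (h2 r hr)).add (h1 r hr)) (by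
    intro r hr
    have hr0 : r ≠ 0 := (zero_lt_one.trans_le hr).ne'
    have := heq r hr
    field_simp at this
    simp
    linear_combination this)
  simp at hc he
  have hs : ∀ r ∈ Ici (1 : ℝ), s r = (s' 1 + s 1) - s' 1 / r := by
    intro r hr
    have hr0 : r ≠ 0 := (zero_lt_one.trans_le hr).ne'
    have e1 := hc r hr
    have e2 := he r hr
    field_simp
    linear_combination r * e2 - e1
  have hT : Tendsto (fun r : ℝ => (s' 1 + s 1) - s' 1 / r) atTop (nhds ((s' 1 + s 1) - 0)) :=
    tendsto_const_nhds.sub (tendsto_id.const_div_atTop _)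
  have hE : s' 1 + s 1 = 0 := by
    have := tendsto_nhds_unique
      (hlim.congr' (by filter_upwards [eventually_ge_atTop 1] with r hr using hs r hr)) hT
    linarith
  refine ⟨hE, fun r hr => ?_⟩
  rw [hs r hr, hE]
  ring

/-- Decaying solutions of `u'' + (2/r) u' - (6/r²) u = 0` are multiples of `1 / r³`: the `r²` mode
`u'(1) + 3 u(1)` is zero. -/
lemma decay_quadrupole {u u' u'' : ℝ → ℝ}
    (h1 : ∀ r ∈ Ici (1 : ℝ), HasDerivWithinAt u (u' r) (Ici 1) r)
    (h2 : ∀ r ∈ Ici (1 : ℝ), HasDerivWithinAt u' (u'' r) (Ici 1) r)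
    (heq : ∀ r ∈ Ici (1 : ℝ), u'' r + (2 / r) * u' r - (6 / r ^ 2) * u r = 0)
    (hlim : Tendsto u atTop (nhds 0)) :
    u' 1 + 3 * u 1 = 0 ∧ ∀ r ∈ Ici (1 : ℝ), 5 * u r = -(u' 1 - 2 * u 1) / r ^ 3 := by
  have hp := eq_at_one (fun r hr => (((hasDerivWithinAt_id r (Ici 1)).pow 4).mul (h2 r hr)).sub
      ((((hasDerivWithinAt_id r (Ici 1)).pow 3).const_mul 2).mul (h1 r hr))) (by
    intro r hr
    have hr0 : r ≠ 0 := (zero_lt_one.trans_le hr).ne'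
    have := heq r hr
    field_simp at this
    simp
    linear_combination r ^ 2 * this)
  have hq := eq_at_one (fun r hr =>
      ((hasDerivWithinAt_inv (zero_lt_one.trans_le hr).ne' (Ici 1)).mul (h2 r hr)).add
      ((((hasDerivWithinAt_inv (zero_lt_one.trans_le hr).ne' (Ici 1)).pow 2).const_mul 3).mul
        (h1 r hr))) (by
    intro r hr
    have hr0 : r ≠ 0 := (zero_lt_one.trans_le hr).ne'
    have := heq r hr
    field_simp at this
    simp
    field_simp
    linear_combination this)
  simp at hp hq
  have hu : ∀ r ∈ Ici (1 : ℝ),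
      5 * u r = (u' 1 + 3 * u 1) * r ^ 2 - (u' 1 - 2 * u 1) / r ^ 3 := by
    intro r hr
    have hr0 : r ≠ 0 := (zero_lt_one.trans_le hr).ne'
    have e1 := hp r hr
    have e2 := hq r hr
    field_simp at e2 ⊢
    linear_combination r ^ 3 * e2 - e1
  -- After division by `r ^ 2` every term but the coefficient of the growing mode tends to zero.
  have hT : Tendsto (fun r : ℝ => 5 * u r * (r ^ 2)⁻¹ + (u' 1 - 2 * u 1) * (r ^ 5)⁻¹) atTop
      (nhds (5 * 0 * 0 + (u' 1 - 2 * u 1) * 0)) :=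
    ((hlim.const_mul 5).mul (tendsto_pow_atTop (by norm_num)).inv_tendsto_atTop).add
      ((tendsto_pow_atTop (by norm_num)).inv_tendsto_atTop.const_mul _)
  have hQ : u' 1 + 3 * u 1 = 0 := by
    have := tendsto_nhds_unique (hT.congr' (f₂ := fun _ => u' 1 + 3 * u 1) (by
      filter_upwards [eventually_ge_atTop 1] with r hr
      have hr0 : r ≠ 0 := (zero_lt_one.trans_le hr).ne'
      rw [hu r hr]
      field_simp
      ring)) tendsto_const_nhds
    linarith
  refine ⟨hQ, fun r hr => ?_⟩
  rw [hu r hr, hQ]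
  ring

/-- The coupled rotationally-symmetric system on `[1,∞)` with the stated boundary
conditions at `r = 1` and decay at infinity has only the trivial solution. -/
theorem stmt_0 (a d : ℝ → ℝ)
    (ha : ContDiffOn ℝ 2 a (Ici 1)) (hd : ContDiffOn ℝ 2 d (Ici 1))
    (heqa : ∀ r ∈ Ici (1 : ℝ),
      derivWithin (derivWithin a (Ici 1)) (Ici 1) r
        + (2 / r) * derivWithin a (Ici 1) r - (4 / r ^ 2) * (a r - d r) = 0)
    (heqd : ∀ r ∈ Ici (1 : ℝ),
      derivWithin (derivWithin d (Ici 1)) (Ici 1) r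
        + (2 / r) * derivWithin d (Ici 1) r + (2 / r ^ 2) * (a r - d r) = 0)
    (hba : a 1 = 0)
    (hbd : derivWithin a (Ici 1) 1 - 2 * d 1 = 0)
    (hlima : Tendsto a atTop (nhds 0))
    (hlimd : Tendsto d atTop (nhds 0)) :
    ∀ r ∈ Ici (1 : ℝ), a r = 0 ∧ d r = 0 := by
  have hA := hasDeriv_pair ha
  have hD := hasDeriv_pair hd
  obtain ⟨hs1, hs⟩ := decay_harmonic
    (fun r hr => (hA r hr).1.add ((hD r hr).1.const_mul 2))
    (fun r hr => (hA r hr).2.add ((hD r hr).2.const_mul 2))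
    (fun r hr => by linear_combination heqa r hr + 2 * heqd r hr)
    (by
      have h := hlima.add (hlimd.const_mul 2)
      rw [mul_zero, add_zero] at h
      exact h)
  obtain ⟨hu1, hu⟩ := decay_quadrupole
    (fun r hr => (hA r hr).1.sub (hD r hr).1)
    (fun r hr => (hA r hr).2.sub (hD r hr).2)
    (fun r hr => by
      simp only [Pi.sub_apply]
      linear_combination heqa r hr - heqd r hr)
    (by
      have h := hlima.sub hlimd
      rw [sub_zero] at h
      exact h)
  simp only [Pi.add_apply, Pi.sub_apply] at hs1 hs hu1 hu
  have hd1 : d 1 = 0 := by linarith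
  have hd1' : derivWithin d (Ici 1) 1 = 0 := by linarith
  have ha1' : derivWithin a (Ici 1) 1 = 0 := by linarith
  intro r hr
  have e1 := hs r hr
  have e2 := hu r hr
  simp only [ha1', hd1', hba, hd1, mul_zero, add_zero, sub_zero, neg_zero, zero_div] at e1 e2
  constructor <;> linarith
end

section
/- Let a, d : (1,∞) → ℝ be twice continuously differentiable functions satisfying, for all r > 1, a''(r) + (2/r)·a'(r) − (4/r²)·(a(r) − d(r)) = 0 and d''(r) + (2/r)·d'(r) + (2/r²)·(a(r) − d(r)) = 0. Then a is four times continuously differentiable on (1,∞) and satisfies r³·a⁗(r) + 8·r²·a‴(r) + 8·r·a''(r) − 8·a'(r) = 0 for all r > 1. -/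
open Set Filter

/-!
Write `u = a - d`. The first equation reads `a'' = 4 u / r² - 2 a' / r`, whose right-hand side is
as smooth as the less smooth of `u` and `a'`; bootstrapping this twice from `a, d ∈ C²` gives
`a ∈ C⁴`. Differentiating it twice expresses `a'''` and `a''''` through `a'`, `u`, `u'`, `u''`, and
the difference of the two equations gives `r² u'' + 2 r u' = 6 u`. After these substitutions the
Euler equation is an identity of rational functions in `r`, `a'`, `u`, `u'`.
-/

/-- On an open set, a differentiable function whose derivative is `C^n` is `C^(n+1)`. -/
lemma contDiffOn_succ_of_deriv {n : ℕ} {f : ℝ → ℝ} {s : Set ℝ} (hs : IsOpen s)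
    (hf : DifferentiableOn ℝ f s) (h : ContDiffOn ℝ n (deriv f) s) :
    ContDiffOn ℝ (n + 1 : ℕ) f s := by
  push_cast
  rw [contDiffOn_succ_iff_deriv_of_isOpen hs]
  exact ⟨hf, by simp, h⟩

lemma contDiffOn_deriv_one {f : ℝ → ℝ} {s : Set ℝ} (hs : IsOpen s)
    (hf : ContDiffOn ℝ 2 f s) : ContDiffOn ℝ 1 (deriv f) s :=
  ((contDiffOn_succ_iff_deriv_of_isOpen (n := 1) hs).1
    (by simpa [one_add_one_eq_two] using hf)).2.2

/-- The derivative of `f` at a point of an open set may be computed from any function that agrees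
with `f` on that set. -/
lemma hasDerivAt_of_eqOn {f g : ℝ → ℝ} {s : Set ℝ} (hs : IsOpen s) (h : EqOn f g s)
    {r g' : ℝ} (hr : r ∈ s) (hg : HasDerivAt g g' r) : HasDerivAt f g' r :=
  hg.congr_of_eventuallyEq (h.eventuallyEq_of_mem (hs.mem_nhds hr))

/-- Elimination of the coupled second-order system for `(a, d)` on `(1,∞)` to a single
fourth-order Euler-type equation for `a`. -/
theorem stmt_1 (a d : ℝ → ℝ)
    (ha : ContDiffOn ℝ 2 a (Ioi 1)) (hd : ContDiffOn ℝ 2 d (Ioi 1))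
    (heqa : ∀ r ∈ Ioi (1 : ℝ),
      iteratedDeriv 2 a r + (2 / r) * deriv a r - (4 / r ^ 2) * (a r - d r) = 0)
    (heqd : ∀ r ∈ Ioi (1 : ℝ),
      iteratedDeriv 2 d r + (2 / r) * deriv d r + (2 / r ^ 2) * (a r - d r) = 0) :
    ContDiffOn ℝ 4 a (Ioi 1) ∧
      ∀ r ∈ Ioi (1 : ℝ),
        r ^ 3 * iteratedDeriv 4 a r + 8 * r ^ 2 * iteratedDeriv 3 a r
          + 8 * r * iteratedDeriv 2 a r - 8 * deriv a r = 0 := by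
  have hs : IsOpen (Ioi (1 : ℝ)) := isOpen_Ioi
  have hne : ∀ r ∈ Ioi (1 : ℝ), r ≠ 0 := fun r hr => (zero_lt_one.trans hr).ne'
  have ha1 := contDiffOn_deriv_one hs ha
  have hd1 := contDiffOn_deriv_one hs hd
  have hda := ha.differentiableOn two_ne_zero
  have hdd := hd.differentiableOn two_ne_zero
  have hda1 := ha1.differentiableOn one_ne_zero
  have hdd1 := hd1.differentiableOn one_ne_zero
  have hA2 : EqOn (deriv (deriv a))
      (fun r => 4 * (a r - d r) / r ^ 2 - 2 * deriv a r / r) (Ioi 1) := by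
    intro r hr
    have h := heqa r hr
    rw [iteratedDeriv_succ, iteratedDeriv_one] at h
    linear_combination h
  have hD2 : EqOn (deriv (deriv d))
      (fun r => -2 * (a r - d r) / r ^ 2 - 2 * deriv d r / r) (Ioi 1) := by
    intro r hr
    have h := heqd r hr
    rw [iteratedDeriv_succ, iteratedDeriv_one] at h
    linear_combination h
  -- The bootstrapping step: `a''` inherits any regularity up to `C²` that `a'` has.
  have boot : ∀ n : ℕ, n ≤ 2 → ContDiffOn ℝ n (deriv a) (Ioi 1) →
      ContDiffOn ℝ n (deriv (deriv a)) (Ioi 1) := by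
    intro n hn h
    have hn' : (n : WithTop ℕ∞) ≤ 2 := by exact_mod_cast hn
    refine ContDiffOn.congr ?_ hA2
    exact ((contDiffOn_const.mul ((ha.of_le hn').sub (hd.of_le hn'))).div (contDiffOn_id.pow 2)
      (fun r hr => pow_ne_zero 2 (hne r hr))).sub
      ((contDiffOn_const.mul h).div contDiffOn_id hne)
  have c2 : ContDiffOn ℝ (2 : ℕ) (deriv a) (Ioi 1) :=
    contDiffOn_succ_of_deriv hs hda1 (boot 1 (by norm_num) (by exact_mod_cast ha1))
  have c3 : ContDiffOn ℝ (3 : ℕ) (deriv a) (Ioi 1) :=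
    contDiffOn_succ_of_deriv hs hda1 (boot 2 le_rfl c2)
  refine ⟨by exact_mod_cast contDiffOn_succ_of_deriv hs hda c3, ?_⟩
  have Ha : ∀ r ∈ Ioi (1 : ℝ), HasDerivAt a (deriv a r) r := fun r hr =>
    (hda.differentiableAt (hs.mem_nhds hr)).hasDerivAt
  have Hd : ∀ r ∈ Ioi (1 : ℝ), HasDerivAt d (deriv d r) r := fun r hr =>
    (hdd.differentiableAt (hs.mem_nhds hr)).hasDerivAt
  have Ha1 : ∀ r ∈ Ioi (1 : ℝ), HasDerivAt (deriv a) (deriv (deriv a) r) r := fun r hr =>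
    (hda1.differentiableAt (hs.mem_nhds hr)).hasDerivAt
  have Hd1 : ∀ r ∈ Ioi (1 : ℝ), HasDerivAt (deriv d) (deriv (deriv d) r) r := fun r hr =>
    (hdd1.differentiableAt (hs.mem_nhds hr)).hasDerivAt
  have hA3 : EqOn (deriv (deriv (deriv a)))
      (fun r => 4 * (deriv a r - deriv d r) / r ^ 2 - 8 * (a r - d r) / r ^ 3
        - 2 * deriv (deriv a) r / r + 2 * deriv a r / r ^ 2) (Ioi 1) := by
    intro r hr
    have h0 := hne r hr
    have h := hasDerivAt_of_eqOn hs hA2 hr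
      (((((Ha r hr).sub (Hd r hr)).const_mul 4).div (hasDerivAt_pow 2 r) (pow_ne_zero 2 h0)).sub
        (((Ha1 r hr).const_mul 2).div (hasDerivAt_id r) h0))
    rw [h.deriv]
    simp only [Pi.sub_apply, id]
    field_simp
    ring
  intro r hr
  have h0 := hne r hr
  have Ha2 : HasDerivAt (deriv (deriv a)) (deriv (deriv (deriv a)) r) r :=
    (((contDiffOn_succ_iff_deriv_of_isOpen (n := 2) hs).1
      (by exact_mod_cast c3)).2.2.differentiableOn two_ne_zero
      |>.differentiableAt (hs.mem_nhds hr)).hasDerivAt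
  have h := hasDerivAt_of_eqOn hs hA3 hr
    (((((((Ha1 r hr).sub (Hd1 r hr)).const_mul 4).div (hasDerivAt_pow 2 r)
      (pow_ne_zero 2 h0)).sub
      ((((Ha r hr).sub (Hd r hr)).const_mul 8).div (hasDerivAt_pow 3 r) (pow_ne_zero 3 h0))).sub
      ((Ha2.const_mul 2).div (hasDerivAt_id r) h0)).add
      (((Ha1 r hr).const_mul 2).div (hasDerivAt_pow 2 r) (pow_ne_zero 2 h0)))
  simp only [iteratedDeriv_succ, iteratedDeriv_zero]
  rw [h.deriv]
  simp only [Pi.sub_apply, id]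
  rw [hA3 hr]
  simp only []
  rw [hA2 hr, hD2 hr]
  field_simp
  ring
end

section
/- Let L ≥ 2 be an integer and c₀ a real constant. Let a, b, c, d : [1,∞) → ℝ be twice continuously differentiable functions satisfying, for all r ≥ 1: d''(r) + (2/r)d'(r) − (2/r²)d(r) + (2/r²)a(r) − (L(L+1)/r²)[d(r) − 2c(r)] = 0; c''(r) + (2/r)c'(r) + (2/r²)c(r) + (4/r³)b(r) − (L(L+1)/r²)c(r) = 0; b''(r) − (4/r²)b(r) + (2/r)a(r) − (2/r)d(r) − (2/r)c(r) − (L(L+1)/r²)[b(r) − 2r·c(r)] = 0; and a''(r) + (2/r)a'(r) − (4/r²)a(r) + (4/r²)d(r) − (L(L+1)/r²)[a(r) − (4/r)b(r) + 2c(r)] = 0. Suppose the boundary conditions c₀ − a(1) = 0, c₀ − L·b(1) = 0, a'(1) + 2a(1) − 2d(1) − L(L+1)·b(1) = 0, b'(1) + 2b(1) + d(1) = 0, and c(1) = 0 hold, and that a(r), b(r), c(r), d(r) all tend to 0 as r → ∞. Then a, b, c, d vanish identically on [1,∞) and c₀ = 0. -/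
/-!
With `B = b / r` and `λ = L (L + 1)`, the system is of Euler type: `r² u'' + 2 r u' = M u` for
`u = (a, B, c, d)` and a constant matrix `M`. Its eigenvalues have the form `m (m + 1)` with
`m = L - 2`, `L` (twice) and `L + 2`, and left eigenvectors decouple it into four scalar equations
`r² w'' + 2 r w' = m (m + 1) w` for
* `w = a + 2 (L + 1) B + (L + 1)² c - d`, `m = L - 2`;
* `w = a - λ c + 2 d` and `w = B + c - d`, `m = L`;
* `w = a - 2 L B + L² c - d`, `m = L + 2`.

A solution tending to `0` is a multiple of `r ^ (-(m + 1))` (`euler_decay`), which gives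
`w'(1) = -(m + 1) w(1)` for each of the four. Together with the boundary conditions this is a
linear system at `r = 1` whose determinant does not vanish for `L ≥ 2` (`boundary_system`), so the
four `w` vanish identically, and with them `a`, `B`, `c`, `d`.
-/

open Set Filter

theorem const_of_hasDerivWithinAt_zero {f : ℝ → ℝ}
    (hf : ∀ r ∈ Ici (1 : ℝ), HasDerivWithinAt f 0 (Ici 1) r) :
    ∀ r ∈ Ici (1 : ℝ), f r = f 1 := by
  intro r hr
  refine (convex_Ici (1 : ℝ)).is_const_of_fderivWithin_eq_zero (𝕜 := ℝ)
    (fun x hx => (hf x hx).differentiableWithinAt) (fun x hx => ?_) hr (mem_Ici.mpr le_rfl)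
  ext
  rw [fderivWithin_derivWithin, (hf x hx).derivWithin (uniqueDiffOn_Ici 1 x hx)]
  rfl

/-- A solution of `r² w'' + 2 r w' = m (m + 1) w` on `[1, ∞)` tending to `0` at infinity is
`w(1) r ^ (-(m + 1))`. The general solution also contains a multiple of `r ^ m`, whose coefficient
is read off from the first integral `(r w' + (m + 1) w) / r ^ m`. -/
theorem euler_decay (m : ℕ) (w w1 w2 : ℝ → ℝ)
    (h1 : ∀ r ∈ Ici (1 : ℝ), HasDerivWithinAt w (w1 r) (Ici 1) r)
    (h2 : ∀ r ∈ Ici (1 : ℝ), HasDerivWithinAt w1 (w2 r) (Ici 1) r)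
    (heq : ∀ r ∈ Ici (1 : ℝ), r ^ 2 * w2 r + 2 * r * w1 r = m * (m + 1) * w r)
    (hlim : Tendsto w atTop (nhds 0)) :
    w1 1 = -(m + 1) * w 1 ∧ ∀ r ∈ Ici (1 : ℝ), r ^ (m + 1) * w r = w 1 := by
  set P : ℝ := w1 1 + (m + 1) * w 1 with hP
  have hp : ∀ r ∈ Ici (1 : ℝ), r * w1 r + (m + 1) * w r = P * r ^ m := by
    intro r hr
    have h := const_of_hasDerivWithinAt_zero
      (f := fun r => (r * w1 r + (m + 1) * w r) / r ^ m) (fun x hx => ?_) r hr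
    · have hr0 : (r : ℝ) ≠ 0 := (zero_lt_one.trans_le hr).ne'
      simp only [one_pow, div_one, one_mul] at h
      rw [div_eq_iff (pow_ne_zero _ hr0)] at h
      exact h
    · have hx0 : (x : ℝ) ≠ 0 := (zero_lt_one.trans_le hx).ne'
      have hd := ((((hasDerivWithinAt_id x (Ici 1)).mul (h2 x hx)).add
        ((h1 x hx).const_mul ((m : ℝ) + 1))).div
        ((hasDerivAt_pow m x).hasDerivWithinAt (s := Ici 1)) (pow_ne_zero _ hx0))
      refine hd.congr_deriv ?_
      rw [div_eq_zero_iff]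
      left
      have e := heq x hx
      simp only [id, Pi.add_apply, Pi.mul_apply]
      rcases m with _ | m
      · simp only [Nat.cast_zero, zero_mul, zero_add, pow_zero, mul_zero, sub_zero, mul_one,
          one_mul] at e ⊢
        have : x * (w1 x + x * w2 x + w1 x) = 0 := by linear_combination e
        exact (mul_eq_zero.mp this).resolve_left hx0
      · simp only [Nat.add_sub_cancel]
        push_cast at e ⊢
        linear_combination x ^ m * e
  have hF : ∀ r ∈ Ici (1 : ℝ), r ^ (m + 1) * w r - P / (2 * m + 1) * r ^ (2 * m + 1)
      = w 1 - P / (2 * m + 1) := by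
    intro r hr
    have h := const_of_hasDerivWithinAt_zero
      (f := fun r => r ^ (m + 1) * w r - P / (2 * m + 1) * r ^ (2 * m + 1))
      (fun x hx => ?_) r hr
    · simpa using h
    · have hd := (((hasDerivAt_pow (m + 1) x).hasDerivWithinAt (s := Ici 1)).mul (h1 x hx)).sub
        (((hasDerivAt_pow (2 * m + 1) x).hasDerivWithinAt (s := Ici 1)).const_mul
          (P / (2 * (m : ℝ) + 1)))
      refine hd.congr_deriv ?_
      have e := hp x hx
      have hm : (2 * (m : ℝ) + 1) ≠ 0 := by positivity
      simp only [Nat.add_sub_cancel]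
      push_cast
      field_simp
      linear_combination x ^ m * e
  have hP0 : P = 0 := by
    have hev : ∀ᶠ r : ℝ in atTop, w r * (r ^ m)⁻¹
        - (w 1 - P / (2 * m + 1)) * (r ^ (2 * m + 1))⁻¹ = P / (2 * m + 1) := by
      filter_upwards [eventually_ge_atTop (1 : ℝ)] with r hr
      have hr0 : (r : ℝ) ≠ 0 := (zero_lt_one.trans_le hr).ne'
      have e := hF r hr
      rw [← e]
      have : r ^ (2 * m + 1) = r ^ m * r ^ (m + 1) := by ring
      rw [this]
      have h3 := pow_ne_zero m hr0
      have h4 := pow_ne_zero (m + 1) hr0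
      field_simp
      ring
    have hl1 : Tendsto (fun r : ℝ => w r * (r ^ m)⁻¹) atTop (nhds 0) := by
      refine squeeze_zero_norm' ?_ (tendsto_zero_iff_norm_tendsto_zero.mp hlim)
      filter_upwards [eventually_ge_atTop (1 : ℝ)] with r hr
      rw [norm_mul]
      refine mul_le_of_le_one_right (norm_nonneg _) ?_
      have h5 : (1 : ℝ) ≤ r ^ m := one_le_pow₀ hr
      rw [Real.norm_of_nonneg (by positivity)]
      exact inv_le_one_of_one_le₀ h5
    have hl2 : Tendsto (fun r : ℝ => (r ^ (2 * m + 1))⁻¹) atTop (nhds 0) :=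
      (tendsto_pow_atTop (by omega)).inv_tendsto_atTop
    have hl := hl1.sub (hl2.const_mul (w 1 - P / (2 * m + 1)))
    rw [mul_zero, sub_zero] at hl
    have h6 := tendsto_nhds_unique (tendsto_const_nhds.congr' (hev.mono fun _ h => h.symm)) hl
    have hm : (2 * (m : ℝ) + 1) ≠ 0 := by positivity
    exact (div_eq_zero_iff.mp h6).resolve_right hm
  refine ⟨by linear_combination hP0 - hP, fun r hr => ?_⟩
  have e := hF r hr
  simpa [hP0] using e

/-- The linear system at `r = 1`: `a1`, `b1`, `c1`, `d1` are the derivatives there, `B = b(1)`,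
and `b1 - B` is the derivative of `b / r`. The conditions `c(1) = 0` and `a(1) = l * B` are
substituted. The determinant has the factors `l (l + 1) - 2`, `2 l + 1` and `2 l - 3`. -/
theorem boundary_system {l B d a1 b1 c1 d1 : ℝ} (hl : 2 ≤ l)
    (e1 : a1 - l * (l + 1) * c1 + 2 * d1 = -(l + 1) * (l * B + 2 * d))
    (e2 : b1 - B + c1 - d1 = -(l + 1) * (B - d))
    (e3 : a1 + 2 * (l + 1) * (b1 - B) + (l + 1) ^ 2 * c1 - d1
      = -(l - 1) * (l * B + 2 * (l + 1) * B - d))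
    (e4 : a1 - 2 * l * (b1 - B) + l ^ 2 * c1 - d1 = -(l + 3) * (l * B - 2 * l * B - d))
    (h3 : a1 + 2 * (l * B) - 2 * d - l * (l + 1) * B = 0) (h4 : b1 + 2 * B + d = 0) :
    B = 0 ∧ d = 0 := by
  have hc : c1 = 2 * B := by
    have h : (l * (l + 1) - 2) * (c1 - 2 * B) = 0 := by
      linear_combination -e1 - 2 * e2 + h3 + 2 * h4
    have h' : l * (l + 1) - 2 ≠ 0 := by nlinarith
    linear_combination (mul_eq_zero.mp h).resolve_left h'
  have hd : d = -l * B := by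
    have h : (2 * l + 1) * (d + l * B) = 0 := by
      subst hc
      linear_combination e4 - e2 - h3 + (2 * l + 1) * h4
    have h' : 2 * l + 1 ≠ 0 := by positivity
    linear_combination (mul_eq_zero.mp h).resolve_left h'
  have hB : B = 0 := by
    have h : (2 * (2 * l - 3) * (2 * l + 1)) * B = 0 := by
      subst hc hd
      linear_combination e3 - e4 - 2 * (2 * l + 1) * h4
    have h' : 2 * (2 * l - 3) * (2 * l + 1) ≠ 0 := by
      have : 0 < 2 * l - 3 := by linarith
      positivity
    exact (mul_eq_zero.mp h).resolve_left h'
  exact ⟨hB, by rw [hd, hB, mul_zero]⟩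

theorem hasDerivWithinAt_of_contDiffOn_two {f : ℝ → ℝ} (hf : ContDiffOn ℝ 2 f (Ici 1)) :
    (∀ r ∈ Ici (1 : ℝ), HasDerivWithinAt f (derivWithin f (Ici 1) r) (Ici 1) r) ∧
    ∀ r ∈ Ici (1 : ℝ), HasDerivWithinAt (derivWithin f (Ici 1))
      (derivWithin (derivWithin f (Ici 1)) (Ici 1) r) (Ici 1) r := by
  have h1 : ContDiffOn ℝ 1 (derivWithin f (Ici 1)) (Ici 1) :=
    hf.derivWithin (uniqueDiffOn_Ici 1) (by norm_num)
  exact ⟨fun r hr => (hf.differentiableOn (by norm_num) r hr).hasDerivWithinAt,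
    fun r hr => (h1.differentiableOn (by norm_num) r hr).hasDerivWithinAt⟩

/-- For degree `L ≥ 2`, the Type (I) radial system on `[1,∞)` with the stated boundary
conditions at `r = 1` and decay at infinity has only the trivial solution. -/
theorem stmt_3 (L : ℕ) (hL : 2 ≤ L) (c₀ : ℝ) (a b c d : ℝ → ℝ)
    (ha : ContDiffOn ℝ 2 a (Ici 1)) (hb : ContDiffOn ℝ 2 b (Ici 1))
    (hc : ContDiffOn ℝ 2 c (Ici 1)) (hd : ContDiffOn ℝ 2 d (Ici 1))
    (heqd : ∀ r ∈ Ici (1 : ℝ),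
      derivWithin (derivWithin d (Ici 1)) (Ici 1) r
        + (2 / r) * derivWithin d (Ici 1) r - (2 / r ^ 2) * d r + (2 / r ^ 2) * a r
        - ((L : ℝ) * ((L : ℝ) + 1) / r ^ 2) * (d r - 2 * c r) = 0)
    (heqc : ∀ r ∈ Ici (1 : ℝ),
      derivWithin (derivWithin c (Ici 1)) (Ici 1) r
        + (2 / r) * derivWithin c (Ici 1) r + (2 / r ^ 2) * c r + (4 / r ^ 3) * b r
        - ((L : ℝ) * ((L : ℝ) + 1) / r ^ 2) * c r = 0)
    (heqb : ∀ r ∈ Ici (1 : ℝ),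
      derivWithin (derivWithin b (Ici 1)) (Ici 1) r
        - (4 / r ^ 2) * b r + (2 / r) * a r - (2 / r) * d r - (2 / r) * c r
        - ((L : ℝ) * ((L : ℝ) + 1) / r ^ 2) * (b r - 2 * r * c r) = 0)
    (heqa : ∀ r ∈ Ici (1 : ℝ),
      derivWithin (derivWithin a (Ici 1)) (Ici 1) r
        + (2 / r) * derivWithin a (Ici 1) r - (4 / r ^ 2) * a r + (4 / r ^ 2) * d r
        - ((L : ℝ) * ((L : ℝ) + 1) / r ^ 2) * (a r - (4 / r) * b r + 2 * c r) = 0)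
    (hbc1 : c₀ - a 1 = 0)
    (hbc2 : c₀ - (L : ℝ) * b 1 = 0)
    (hbc3 : derivWithin a (Ici 1) 1 + 2 * a 1 - 2 * d 1 - (L : ℝ) * ((L : ℝ) + 1) * b 1 = 0)
    (hbc4 : derivWithin b (Ici 1) 1 + 2 * b 1 + d 1 = 0)
    (hbc5 : c 1 = 0)
    (hlima : Tendsto a atTop (nhds 0)) (hlimb : Tendsto b atTop (nhds 0))
    (hlimc : Tendsto c atTop (nhds 0)) (hlimd : Tendsto d atTop (nhds 0)) :
    (∀ r ∈ Ici (1 : ℝ), a r = 0 ∧ b r = 0 ∧ c r = 0 ∧ d r = 0) ∧ c₀ = 0 := by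
  obtain ⟨ha1, ha2⟩ := hasDerivWithinAt_of_contDiffOn_two ha
  obtain ⟨hb1, hb2⟩ := hasDerivWithinAt_of_contDiffOn_two hb
  obtain ⟨hc1, hc2⟩ := hasDerivWithinAt_of_contDiffOn_two hc
  obtain ⟨hd1, hd2⟩ := hasDerivWithinAt_of_contDiffOn_two hd
  generalize derivWithin (derivWithin a (Ici 1)) (Ici 1) = a2 at *
  generalize derivWithin (derivWithin b (Ici 1)) (Ici 1) = b2 at *
  generalize derivWithin (derivWithin c (Ici 1)) (Ici 1) = c2 at *
  generalize derivWithin (derivWithin d (Ici 1)) (Ici 1) = d2 at *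
  generalize derivWithin a (Ici 1) = a1 at *
  generalize derivWithin b (Ici 1) = b1 at *
  generalize derivWithin c (Ici 1) = c1 at *
  generalize derivWithin d (Ici 1) = d1 at *
  set l : ℝ := (L : ℝ) with hl
  have hl2 : (2 : ℝ) ≤ l := by rw [hl]; exact_mod_cast hL
  -- Every linear combination `x a + y b / r + z c + t d` whose coefficients form a left
  -- eigenvector for the eigenvalue `m (m + 1)` is governed by `euler_decay`.
  have key : ∀ (m : ℕ) (x y z t : ℝ),
      (4 + l * (l + 1)) * x - 2 * y - 2 * t = m * (m + 1) * x →
      -4 * (l * (l + 1)) * x + (4 + l * (l + 1)) * y - 4 * z = m * (m + 1) * y →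
      2 * (l * (l + 1)) * x + (2 - 2 * (l * (l + 1))) * y + (l * (l + 1) - 2) * z
        - 2 * (l * (l + 1)) * t = m * (m + 1) * z →
      -4 * x + 2 * y + (2 + l * (l + 1)) * t = m * (m + 1) * t →
      x * a1 1 + y * (b1 1 - b 1) + z * c1 1 + t * d1 1
        = -(m + 1) * (x * a 1 + y * b 1 + z * c 1 + t * d 1) ∧
      ∀ r ∈ Ici (1 : ℝ), r ^ (m + 1) * (x * a r + y * (b r / r) + z * c r + t * d r)
        = x * a 1 + y * b 1 + z * c 1 + t * d 1 := by
    intro m x y z t k1 k2 k3 k4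
    have h := euler_decay m (fun r => x * a r + y * (b r / r) + z * c r + t * d r)
      (fun r => x * a1 r + y * (b1 r / r - b r / r ^ 2) + z * c1 r + t * d1 r)
      (fun r => x * a2 r + y * (b2 r / r - 2 * b1 r / r ^ 2 + 2 * b r / r ^ 3)
        + z * c2 r + t * d2 r) ?_ ?_ ?_ ?_
    · simpa using h
    · intro r hr
      have hr0 : r ≠ 0 := (zero_lt_one.trans_le hr).ne'
      have hd := ((((ha1 r hr).const_mul x).add
        (((hb1 r hr).div (hasDerivWithinAt_id r (Ici 1)) hr0).const_mul y)).add
        ((hc1 r hr).const_mul z)).add ((hd1 r hr).const_mul t)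
      refine hd.congr_deriv ?_
      simp only [id]
      field_simp
    · intro r hr
      have hr0 : r ≠ 0 := (zero_lt_one.trans_le hr).ne'
      have hd := ((((ha2 r hr).const_mul x).add
        ((((hb2 r hr).div (hasDerivWithinAt_id r (Ici 1)) hr0).sub
          ((hb1 r hr).div ((hasDerivAt_pow 2 r).hasDerivWithinAt (s := Ici 1))
            (pow_ne_zero 2 hr0))).const_mul y)).add
        ((hc2 r hr).const_mul z)).add ((hd2 r hr).const_mul t)
      refine hd.congr_deriv ?_
      simp only [id]
      field_simp
      push_cast
      ring
    · intro r hr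
      have hr0 : r ≠ 0 := (zero_lt_one.trans_le hr).ne'
      have ea := heqa r hr
      have eb := heqb r hr
      have ec := heqc r hr
      have ed := heqd r hr
      have ea' : r ^ 2 * a2 r + 2 * r * a1 r = (4 + l * (l + 1)) * a r
          - 4 * (l * (l + 1)) * (b r / r) + 2 * (l * (l + 1)) * c r - 4 * d r := by
        field_simp at ea ⊢
        linear_combination ea
      have eb' : r * b2 r = (4 + l * (l + 1)) * (b r / r) - 2 * a r + 2 * d r
          + (2 - 2 * (l * (l + 1))) * c r := by
        field_simp at eb ⊢
        linear_combination eb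
      have ec' : r ^ 2 * c2 r + 2 * r * c1 r = (l * (l + 1) - 2) * c r - 4 * (b r / r) := by
        field_simp at ec ⊢
        linear_combination ec
      have ed' : r ^ 2 * d2 r + 2 * r * d1 r = (2 + l * (l + 1)) * d r - 2 * a r
          - 2 * (l * (l + 1)) * c r := by
        field_simp at ed ⊢
        linear_combination ed
      have eB : r ^ 2 * (b2 r / r - 2 * b1 r / r ^ 2 + 2 * b r / r ^ 3)
          + 2 * r * (b1 r / r - b r / r ^ 2) = r * b2 r := by
        field_simp
        ring
      linear_combination x * ea' + y * (eB + eb') + z * ec' + t * ed' + a r * k1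
        + (b r / r) * k2 + c r * k3 + d r * k4
    · have hB : Tendsto (fun r => b r / r) atTop (nhds 0) := hlimb.div_atTop tendsto_id
      simpa using (((hlima.const_mul x).add (hB.const_mul y)).add (hlimc.const_mul z)).add
        (hlimd.const_mul t)
  obtain ⟨k, rfl⟩ : ∃ k, L = k + 2 := ⟨L - 2, by omega⟩
  have hk : (k : ℝ) = l - 2 := by rw [hl]; push_cast; ring
  obtain ⟨p1, q1⟩ := key (k + 2) 1 0 (-(l * (l + 1))) 2 (by rw [← hl]; ring) (by rw [← hl]; ring)
    (by rw [← hl]; ring) (by rw [← hl]; ring)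
  obtain ⟨p2, q2⟩ := key (k + 2) 0 1 1 (-1) (by rw [← hl]; ring) (by rw [← hl]; ring)
    (by rw [← hl]; ring) (by rw [← hl]; ring)
  obtain ⟨p3, q3⟩ := key k 1 (2 * (l + 1)) ((l + 1) ^ 2) (-1) (by rw [hk]; ring)
    (by rw [hk]; ring) (by rw [hk]; ring) (by rw [hk]; ring)
  obtain ⟨p4, q4⟩ := key (k + 4) 1 (-2 * l) (l ^ 2) (-1) (by push_cast; rw [hk]; ring)
    (by push_cast; rw [hk]; ring) (by push_cast; rw [hk]; ring) (by push_cast; rw [hk]; ring)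
  have hA : a 1 = l * b 1 := by linarith
  rw [← hl] at p1 p2
  push_cast at p4
  rw [hk] at p3 p4
  rw [hA, hbc5] at p1 p2 p3 p4
  rw [hA] at hbc3
  obtain ⟨hB0, hD0⟩ := boundary_system (l := l) (B := b 1) (d := d 1) (a1 := a1 1) (b1 := b1 1)
    (c1 := c1 1) (d1 := d1 1) hl2 (by linear_combination p1) (by linear_combination p2)
    (by linear_combination p3) (by linear_combination p4) hbc3 hbc4
  have hA0 : a 1 = 0 := by rw [hA, hB0, mul_zero]
  refine ⟨fun r hr => ?_, by linarith⟩
  have hr0 : r ≠ 0 := (zero_lt_one.trans_le hr).ne'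
  have s1 := q1 r hr
  have s2 := q2 r hr
  have s3 := q3 r hr
  have s4 := q4 r hr
  simp only [hA0, hB0, hbc5, hD0, mul_zero, add_zero, mul_eq_zero, pow_ne_zero _ hr0, false_or]
    at s1 s2 s3 s4
  set B := b r / r with hBdef
  have t1 : c r = -2 * B := by
    have h : (2 * l + 1) * (c r + 2 * B) = 0 := by linear_combination s3 - s4
    have h' : 2 * l + 1 ≠ 0 := by positivity
    linear_combination (mul_eq_zero.mp h).resolve_left h'
  have t2 : d r = -B := by linear_combination t1 - s2
  have t3 : B = 0 := by
    have h : (4 * (l * (l + 1)) - 3) * B = 0 := by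
      rw [t1, t2] at s1 s3
      linear_combination s1 - s3
    have h' : 4 * (l * (l + 1)) - 3 ≠ 0 := by nlinarith
    exact (mul_eq_zero.mp h).resolve_left h'
  have tc : c r = 0 := by rw [t1, t3, mul_zero]
  have td : d r = 0 := by rw [t2, t3, neg_zero]
  refine ⟨by rw [tc, td] at s1; linear_combination s1, ?_, tc, td⟩
  exact (div_eq_zero_iff.mp (hBdef ▸ t3)).resolve_right hr0
end

section
/- Let L ≥ 2 be an integer and let b, c : (1,∞) → ℝ be twice continuously differentiable functions satisfying, for all r > 1: c''(r) − (2/r)c'(r) + (4 − L(L+1))·(1/r²)·c(r) + (4/r)·b(r) = 0 and b''(r) − (4 + L(L+1))·(1/r²)·b(r) + (L(L+1) − 2)·(1/r³)·c(r) = 0. Then c is four times continuously differentiable on (1,∞) and satisfies r⁴·c⁗(r) − 2L(L+1)·r²·c''(r) + 4L(L+1)·r·c'(r) + [L²(L+1)² − 6L(L+1)]·c(r) = 0 for all r > 1. -/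
/-! Write `M = L (L + 1)`. The first equation expresses `c''` through `c'`, `c` and `b`, so its
right-hand side is `C¹`, hence `c` is `C³`; the right-hand side is then `C²`, hence `c` is `C⁴`.
Solved for `b`, the same equation reads `4 b = -r c'' + 2 c' - (4 - M) c / r`. Differentiating this
twice and substituting into the second equation, multiplied by `-4 r³`, gives the Euler equation. -/

open Set Filter

/-- The fact `contDiffOn_succ_iff_deriv_of_isOpen` at a natural-number order, where
its analyticity condition is vacuous. -/
theorem contDiffOn_succ_iff_deriv_Ioi {f : ℝ → ℝ} {n : ℕ} :
    ContDiffOn ℝ ((n + 1 : ℕ) : WithTop ℕ∞) f (Ioi 1) ↔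
      DifferentiableOn ℝ f (Ioi 1) ∧ ContDiffOn ℝ (n : WithTop ℕ∞) (deriv f) (Ioi 1) := by
  push_cast
  rw [contDiffOn_succ_iff_deriv_of_isOpen isOpen_Ioi]
  simp

theorem hasDerivAt_of_contDiffOn_Ioi {f : ℝ → ℝ} {n : ℕ}
    (hf : ContDiffOn ℝ ((n + 1 : ℕ) : WithTop ℕ∞) f (Ioi 1)) {r : ℝ} (hr : r ∈ Ioi (1 : ℝ)) :
    HasDerivAt f (deriv f r) r :=
  ((contDiffOn_succ_iff_deriv_Ioi.1 hf).1.differentiableAt (isOpen_Ioi.mem_nhds hr)).hasDerivAt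

/-- For degree `L ≥ 2`, elimination of the Type (II) radial system on `(1,∞)` to a single
fourth-order Euler-type equation for `c`. -/
theorem stmt_10 (L : ℕ) (hL : 2 ≤ L) (b c : ℝ → ℝ)
    (hb : ContDiffOn ℝ 2 b (Ioi 1)) (hc : ContDiffOn ℝ 2 c (Ioi 1))
    (heqc : ∀ r ∈ Ioi (1 : ℝ),
      iteratedDeriv 2 c r - (2 / r) * deriv c r
        + (4 - (L : ℝ) * ((L : ℝ) + 1)) * (1 / r ^ 2) * c r + (4 / r) * b r = 0)
    (heqb : ∀ r ∈ Ioi (1 : ℝ),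
      iteratedDeriv 2 b r - (4 + (L : ℝ) * ((L : ℝ) + 1)) * (1 / r ^ 2) * b r
        + ((L : ℝ) * ((L : ℝ) + 1) - 2) * (1 / r ^ 3) * c r = 0) :
    ContDiffOn ℝ 4 c (Ioi 1) ∧
      ∀ r ∈ Ioi (1 : ℝ),
        r ^ 4 * iteratedDeriv 4 c r
          - 2 * (L : ℝ) * ((L : ℝ) + 1) * r ^ 2 * iteratedDeriv 2 c r
          + 4 * (L : ℝ) * ((L : ℝ) + 1) * r * deriv c r
          + ((L : ℝ) ^ 2 * ((L : ℝ) + 1) ^ 2 - 6 * (L : ℝ) * ((L : ℝ) + 1)) * c r = 0 := by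
  have i2 : ∀ f : ℝ → ℝ, iteratedDeriv 2 f = deriv (deriv f) := fun f => by
    simp [iteratedDeriv_succ, iteratedDeriv_zero]
  have i4 : iteratedDeriv 4 c = deriv (deriv (deriv (deriv c))) := by
    simp [iteratedDeriv_succ, iteratedDeriv_zero]
  simp only [i2] at heqc heqb
  simp only [i2, i4]
  set M : ℝ := (L : ℝ) * ((L : ℝ) + 1) with hM
  have hc2 : ContDiffOn ℝ ((1 + 1 : ℕ) : WithTop ℕ∞) c (Ioi 1) := hc
  have hcd := (contDiffOn_succ_iff_deriv_Ioi.1 hc2).1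
  have hc1 := (contDiffOn_succ_iff_deriv_Ioi.1 hc2).2
  have hc1d := ((contDiffOn_succ_iff_deriv_Ioi (n := 0)).1 hc1).1
  have ne0 : ∀ r ∈ Ioi (1 : ℝ), r ≠ 0 := fun r hr => by
    have : (1 : ℝ) < r := hr
    positivity
  -- One step of the bootstrap: `c''` is as smooth as the other terms of the first equation.
  have boot : ∀ n : ℕ, n ≤ 2 → ContDiffOn ℝ (n : WithTop ℕ∞) c (Ioi 1) →
      ContDiffOn ℝ (n : WithTop ℕ∞) (deriv c) (Ioi 1) →
      ContDiffOn ℝ (n : WithTop ℕ∞) (deriv (deriv c)) (Ioi 1) := by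
    intro n hn h0 h1
    have hbn : ContDiffOn ℝ (n : WithTop ℕ∞) b (Ioi 1) := hb.of_le (by exact_mod_cast hn)
    have hinv : ContDiffOn ℝ (n : WithTop ℕ∞) (fun r : ℝ => r⁻¹) (Ioi 1) :=
      contDiffOn_id.inv ne0
    have hG : ContDiffOn ℝ (n : WithTop ℕ∞)
        (fun r => 2 * r⁻¹ * deriv c r - (4 - M) * (r⁻¹) ^ 2 * c r - 4 * r⁻¹ * b r) (Ioi 1) := by
      fun_prop
    refine hG.congr fun r hr => ?_
    have h := heqc r hr
    simp only [div_eq_mul_inv, one_mul, ← inv_pow] at h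
    linarith
  have hd1 := boot 1 (by norm_num) (hc2.of_le (by norm_num)) hc1
  have hc1' : ContDiffOn ℝ ((1 + 1 : ℕ) : WithTop ℕ∞) (deriv c) (Ioi 1) :=
    contDiffOn_succ_iff_deriv_Ioi.2 ⟨hc1d, hd1⟩
  have hd2 : ContDiffOn ℝ ((1 + 1 : ℕ) : WithTop ℕ∞) (deriv (deriv c)) (Ioi 1) :=
    boot 2 le_rfl hc2 hc1'
  have hd3 := (contDiffOn_succ_iff_deriv_Ioi.1 hd2).2
  have hc4 : ContDiffOn ℝ ((3 + 1 : ℕ) : WithTop ℕ∞) c (Ioi 1) :=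
    contDiffOn_succ_iff_deriv_Ioi.2 ⟨hcd, contDiffOn_succ_iff_deriv_Ioi.2 ⟨hc1d, hd2⟩⟩
  refine ⟨hc4, fun r hr => ?_⟩
  have hb0 : ∀ x ∈ Ioi (1 : ℝ),
      b x = (-(x * deriv (deriv c) x) + 2 * deriv c x - (4 - M) * (c x * x⁻¹)) / 4 := by
    intro x hx
    have h := heqc x hx
    have hx0 := ne0 x hx
    field_simp at h ⊢
    linarith
  have hb1 : ∀ x ∈ Ioi (1 : ℝ), deriv b x =
      (-(x * deriv (deriv (deriv c)) x) + deriv (deriv c) x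
        - (4 - M) * (deriv c x * x⁻¹ - c x * (x⁻¹) ^ 2)) / 4 := by
    intro x hx
    have e : b =ᶠ[nhds x] _ := Filter.eventuallyEq_of_mem (isOpen_Ioi.mem_nhds hx) hb0
    rw [e.deriv_eq]
    have k0 := hasDerivAt_of_contDiffOn_Ioi hc4 hx
    have k1 := hasDerivAt_of_contDiffOn_Ioi hc1' hx
    have k2 := hasDerivAt_of_contDiffOn_Ioi hd2 hx
    have ki := hasDerivAt_inv (ne0 x hx)
    have key := (((((hasDerivAt_id' x).mul k2).neg.add (k1.const_mul 2)).sub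
      ((k0.mul ki).const_mul (4 - M))).div_const 4)
    refine key.deriv.trans ?_
    rw [inv_pow]
    ring
  have hb2 : deriv (deriv b) r =
      (-(r * deriv (deriv (deriv (deriv c))) r)
        - (4 - M) * (deriv (deriv c) r * r⁻¹ - 2 * deriv c r * (r⁻¹) ^ 2
          + 2 * c r * (r⁻¹) ^ 3)) / 4 := by
    have e : deriv b =ᶠ[nhds r] _ := Filter.eventuallyEq_of_mem (isOpen_Ioi.mem_nhds hr) hb1
    rw [e.deriv_eq]
    have k0 := hasDerivAt_of_contDiffOn_Ioi hc4 hr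
    have k1 := hasDerivAt_of_contDiffOn_Ioi hc1' hr
    have k2 := hasDerivAt_of_contDiffOn_Ioi hd2 hr
    have k3 := hasDerivAt_of_contDiffOn_Ioi (n := 0) hd3 hr
    have ki := hasDerivAt_inv (ne0 r hr)
    have key := (((((hasDerivAt_id' r).mul k3).neg.add k2).sub
      (((k1.mul ki).sub (k0.mul (ki.pow 2))).const_mul (4 - M))).div_const 4)
    refine key.deriv.trans ?_
    simp only [Pi.pow_apply, Nat.cast_ofNat, Nat.reduceSub]
    ring
  have h := heqb r hr
  have hr0 := ne0 r hr
  rw [hb2, hb0 r hr] at h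
  field_simp at h
  rw [hM] at h
  linear_combination (-1) * h
end
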